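/- Let R : P₂ → ℝ be Lebesgue measurable and essentially bounded, satisfying the 6-term equation almost everywhere and the symmetry equation almost everywhere, let C ∈ ℝ, let L : (0,1) → ℝ be Lebesgue measurable and solve the perturbed Spence-Abel system almost everywhere with data (R, C), and let k ∈ ℕ ∪ {∞}. Then L agrees almost everywhere with a function of class C^k on the interval (0,1) if and only if R agrees almost everywhere with a function of class C^k on the open set P₂. -/

import Mathlib

open MeasureTheory Set

/-- The parameter space `P₂ = {(x,y) : 0 < x < y < 1}`. -/
def P2 : Set (ℝ × ℝ) := {p | 0 < p.1 ∧ p.1 < p.2 ∧ p.2 < 1}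

/-- The parameter space `P₃ = {(x,y,z) : 0 < x < y < z < 1}`. -/
def P3 : Set (ℝ × ℝ × ℝ) := {p | 0 < p.1 ∧ p.1 < p.2.1 ∧ p.2.1 < p.2.2 ∧ p.2.2 < 1}

/-- `L` solves the perturbed Spence–Abel system almost everywhere with data `(R, C)`. -/
def SolvesAE (R : ℝ × ℝ → ℝ) (C : ℝ) (L : ℝ → ℝ) : Prop :=
  (∀ᵐ p ∂(volume.restrict P2),
    L p.1 - L p.2 - L (p.1 / p.2) - L ((p.2 - 1) / (p.1 - 1))
      + L (p.1 * (p.2 - 1) / (p.2 * (p.1 - 1))) = R p) ∧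
  (∀ᵐ x ∂(volume.restrict (Set.Ioo (0:ℝ) 1)), L (1 - x) = C - L x)

/-- `R` satisfies the 6-term equation almost everywhere on `P₃`. -/
def SixTermAE (R : ℝ × ℝ → ℝ) : Prop :=
  ∀ᵐ p ∂(volume.restrict P3),
    R (p.1, p.2.1) - R (p.1, p.2.2) + R (p.2.1, p.2.2)
      - R (p.1 / p.2.2, p.2.1 / p.2.2)
      - R ((p.2.2 - 1) / (p.1 - 1), (p.2.2 - 1) / (p.2.1 - 1))
      + R (p.1 * (p.2.2 - 1) / (p.2.2 * (p.1 - 1)),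
           p.2.1 * (p.2.2 - 1) / (p.2.2 * (p.2.1 - 1))) = 0

/-- `R` satisfies the symmetry equation almost everywhere on `P₂`. -/
def SymmAE (R : ℝ × ℝ → ℝ) : Prop :=
  ∀ᵐ p ∂(volume.restrict P2), R (1 - p.2, (1 - p.2) / (1 - p.1)) = R p

/-!
Multiply the five-term equation by a bump function `χ (x, y)` supported in `P₂` and integrate over
`y`. The first term becomes `L x` times a smooth positive function of `x`. In each of the other
terms `∫ χ (x, y) L (T (x, y)) dy` the argument `T` has nonvanishing `y`-derivative, so the
substitution `u = T (x, y)` turns the term into `∫ G (x, u) L u du` with a smooth compactly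
supported kernel `G`, which is as smooth in `x` as `G` no matter how rough `L` is. So `L` inherits
the smoothness of `R`.

For this `L` must be locally integrable, and in fact it is locally bounded as soon as it is
measurable and `R` is locally bounded: the maps `y ↦ T (x, y)` distort measure by a bounded factor,
so when `m` is large, for every `x` in a compact interval the set of `y` with `|L (T (x, y))| > m`
for some `T` is too small to fill a fiber, and any remaining `y` bounds `|L x|`.
-/

open Filter Function Metric Topology
open scoped NNReal

section Locality

variable {E F : Type*} [NormedAddCommGroup E] [NormedSpace ℝ E]
  [NormedAddCommGroup F] [NormedSpace ℝ F]

lemma contDiff_of_forall_mem_tsupport {n : WithTop ℕ∞} {f : E → F}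
    (h : ∀ x ∈ tsupport f, ContDiffAt ℝ n f x) : ContDiff ℝ n f :=
  contMDiff_iff_contDiff.1 (contMDiff_of_tsupport fun x hx ↦ (h x hx).contMDiffAt)

lemma ae_restrict_of_forall_mem_nhdsWithin {X : Type*} [TopologicalSpace X]
    [SecondCountableTopology X] [MeasurableSpace X] {μ : Measure X} {s : Set X} {p : X → Prop}
    (h : ∀ x ∈ s, ∃ t ∈ 𝓝[s] x, ∀ᵐ y ∂μ.restrict t, p y) : ∀ᵐ y ∂μ.restrict s, p y := by
  choose! t ht hp using h
  obtain ⟨c, hcs, hc, hsub⟩ := TopologicalSpace.countable_cover_nhdsWithin ht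
  exact ae_restrict_of_ae_restrict_of_subset hsub
    ((ae_restrict_biUnion_iff t hc p).2 fun x hx ↦ hp x (hcs hx))

/-- `f` agrees almost everywhere on `s` with a function of class `C^n` on `s`. -/
def HasContDiffRep [MeasureSpace E] (n : WithTop ℕ∞) (f : E → F) (s : Set E) : Prop :=
  ∃ g : E → F, ContDiffOn ℝ n g s ∧ ∀ᵐ x ∂volume.restrict s, f x = g x

lemma hasContDiffRep_of_locally [MeasureSpace E] [OpensMeasurableSpace E]
    [SecondCountableTopology E] [(volume : Measure E).IsOpenPosMeasure] {n : WithTop ℕ∞}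
    {f : E → F} {s : Set E} (hs : IsOpen s)
    (h : ∀ x ∈ s, ∃ U, IsOpen U ∧ x ∈ U ∧ HasContDiffRep n f U) :
    HasContDiffRep n f s := by
  choose! U hUo hxU g hg hfg using h
  have g_eq : ∀ x ∈ s, ∀ y ∈ s, y ∈ U x → g y y = g x y := fun x hx y hy hyx ↦
    Measure.eqOn_open_of_ae_eq (μ := volume) (U := U y ∩ U x)
      (by filter_upwards [ae_restrict_of_ae_restrict_of_subset inter_subset_left (hfg y hy),
            ae_restrict_of_ae_restrict_of_subset inter_subset_right (hfg x hx)] with z hzy hzx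
          rw [← hzy, hzx])
      ((hUo y hy).inter (hUo x hx)) ((hg y hy).continuousOn.mono inter_subset_left)
      ((hg x hx).continuousOn.mono inter_subset_right) ⟨hxU y hy, hyx⟩
  refine ⟨fun x ↦ g x x, fun x hx ↦ ?_, ?_⟩
  · have hU : U x ∈ 𝓝 x := (hUo x hx).mem_nhds (hxU x hx)
    refine ((hg x hx).contDiffAt hU).contDiffWithinAt.congr_of_eventuallyEq ?_
      (g_eq x hx x hx (hxU x hx))
    filter_upwards [self_mem_nhdsWithin, mem_nhdsWithin_of_mem_nhds hU] with y hy hyU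
      using g_eq x hx y hy hyU
  · refine ae_restrict_of_forall_mem_nhdsWithin fun x hx ↦
      ⟨s ∩ U x, inter_mem_nhdsWithin s ((hUo x hx).mem_nhds (hxU x hx)), ?_⟩
    filter_upwards [ae_restrict_of_ae_restrict_of_subset inter_subset_right (hfg x hx),
      ae_restrict_mem (hs.inter (hUo x hx)).measurableSet] with y hy hyU
    rw [hy, g_eq x hx y hyU.1 hyU.2]

end Locality

section InverseFunction

variable {E F : Type*} [NormedAddCommGroup E] [NormedSpace ℝ E] [CompleteSpace E]
  [NormedAddCommGroup F] [NormedSpace ℝ F] {Φ : E → F} {n : WithTop ℕ∞}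

lemma exists_contDiffAt_localInverse {a : E} (hΦ : ContDiffAt ℝ n Φ a) (hn : n ≠ 0)
    (hinv : (fderiv ℝ Φ a).IsInvertible) :
    ∃ Ψ : F → E, ContDiffAt ℝ n Ψ (Φ a) ∧ Ψ (Φ a) = a ∧
      (∀ᶠ p in 𝓝 a, Ψ (Φ p) = p) ∧ ∀ᶠ q in 𝓝 (Φ a), Φ (Ψ q) = q := by
  obtain ⟨e, he⟩ := hinv
  have hderiv : HasFDerivAt Φ (e : E →L[ℝ] F) a :=
    he ▸ (hΦ.differentiableAt hn).hasFDerivAt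
  have hstrict : HasStrictFDerivAt Φ (e : E →L[ℝ] F) a := hΦ.hasStrictFDerivAt' hderiv hn
  exact ⟨hΦ.localInverse hderiv hn, hΦ.to_localInverse hderiv hn,
    hstrict.localInverse_apply_image, hstrict.eventually_left_inverse,
    hstrict.eventually_right_inverse⟩

lemma exists_contDiff_comp_eq_of_injOn {Q : Set E} (hQ : IsOpen Q) (hinj : InjOn Φ Q)
    (hn : n ≠ 0) (hΦ : ∀ p ∈ Q, ContDiffAt ℝ n Φ p)
    (hinv : ∀ p ∈ Q, (fderiv ℝ Φ p).IsInvertible)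
    {m : WithTop ℕ∞} (hmn : m ≤ n) {w : E → ℝ} (hw : ContDiff ℝ m w) (hwc : HasCompactSupport w)
    (hwQ : tsupport w ⊆ Q) :
    ∃ G : F → ℝ, ContDiff ℝ m G ∧ HasCompactSupport G ∧ support G ⊆ Φ '' tsupport w ∧
      ∀ p ∈ Q, G (Φ p) = w p := by
  classical
  set G : F → ℝ := extend (Q.domRestrict Φ) (Q.domRestrict w) 0
  have hGΦ : ∀ p ∈ Q, G (Φ p) = w p := fun p hp ↦
    (injOn_iff_injective.1 hinj).extend_apply _ _ ⟨p, hp⟩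
  have hsupp : support G ⊆ Φ '' tsupport w := by
    intro q hq
    by_cases hqQ : ∃ p : Q, Q.domRestrict Φ p = q
    · obtain ⟨⟨p, hp⟩, rfl⟩ := hqQ
      exact ⟨p, subset_tsupport w fun hwp ↦ hq ((hGΦ p hp).trans hwp), rfl⟩
    · exact absurd (extend_apply' _ _ _ hqQ) hq
  have hcompact : IsCompact (Φ '' tsupport w) :=
    hwc.isCompact.image_of_continuousOn fun p hp ↦
      (hΦ p (hwQ hp)).continuousAt.continuousWithinAt
  refine ⟨G, contDiff_of_forall_mem_tsupport fun q hq ↦ ?_,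
    .of_support_subset_isCompact hcompact hsupp, hsupp, hGΦ⟩
  obtain ⟨p, hp, rfl⟩ := closure_minimal hsupp hcompact.isClosed hq
  obtain ⟨Ψ, hΨ, hΨp, -, hright⟩ :=
    exists_contDiffAt_localInverse (hΦ p (hwQ hp)) hn (hinv p (hwQ hp))
  have hΨQ : ∀ᶠ q in 𝓝 (Φ p), Ψ q ∈ Q :=
    hΨ.continuousAt.eventually_mem (by rw [hΨp]; exact hQ.mem_nhds (hwQ hp))
  refine (hw.contDiffAt.comp (Φ p) (hΨ.of_le hmn)).congr_of_eventuallyEq ?_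
  filter_upwards [hright, hΨQ] with q hq hqQ
  rw [comp_apply, ← hGΦ _ hqQ, hq]

lemma measure_inter_preimage_eq_zero_of_isInvertible_fderiv {E : Type*} [NormedAddCommGroup E]
    [NormedSpace ℝ E] [FiniteDimensional ℝ E] [MeasurableSpace E] [BorelSpace E] {μ : Measure E}
    [μ.IsAddHaarMeasure] {Φ : E → E} {s N : Set E} (hΦ : ∀ p ∈ s, ContDiffAt ℝ 1 Φ p)
    (hinv : ∀ p ∈ s, (fderiv ℝ Φ p).IsInvertible) (hN : μ N = 0) : μ (s ∩ Φ ⁻¹' N) = 0 := by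
  have := FiniteDimensional.complete ℝ E
  have := FiniteDimensional.proper_real E
  refine measure_null_of_locally_null _ fun p hp ↦ ?_
  obtain ⟨Ψ, hΨ, -, hleft, -⟩ :=
    exists_contDiffAt_localInverse (hΦ p hp.1) one_ne_zero (hinv p hp.1)
  have hdiff : ∀ᶠ p' in 𝓝 p, DifferentiableAt ℝ Ψ (Φ p') :=
    (hΦ p hp.1).continuousAt.eventually
      ((hΨ.eventually (by simp)).mono fun q hq ↦ hq.differentiableAt one_ne_zero)
  refine ⟨_, inter_mem self_mem_nhdsWithin (mem_nhdsWithin_of_mem_nhds (hleft.and hdiff)), ?_⟩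
  refine measure_mono_null ?_ (addHaar_image_eq_zero_of_differentiableOn_of_addHaar_eq_zero μ
    (f := Ψ) (s := {q ∈ N | DifferentiableAt ℝ Ψ q})
    (fun q hq ↦ hq.2.differentiableWithinAt) (measure_mono_null (sep_subset _ _) hN))
  rintro p' ⟨⟨-, hp'N⟩, hp'left, hp'diff⟩
  exact ⟨Φ p', ⟨hp'N, hp'diff⟩, hp'left⟩

end InverseFunction

section FiberMap

/-- The partial derivative of `T` in its second variable. -/
noncomputable def partialSnd (T : ℝ × ℝ → ℝ) (p : ℝ × ℝ) : ℝ := fderiv ℝ T p (0, 1)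

/-- The map `(x, y) ↦ (x, T (x, y))`, which straightens the fibers `{x} × ℝ` along `T`. -/
def fiberMap (T : ℝ × ℝ → ℝ) (p : ℝ × ℝ) : ℝ × ℝ := (p.1, T p)

/-- `T` is of class `C^n` at the points of `s` and its derivative along the fibers `{x} × ℝ` does
not vanish there, so that `fiberMap T` is a local diffeomorphism. -/
structure IsFiberwiseSubmersion (n : WithTop ℕ∞) (T : ℝ × ℝ → ℝ) (s : Set (ℝ × ℝ)) : Prop where
  contDiffAt : ∀ p ∈ s, ContDiffAt ℝ n T p
  partialSnd_ne_zero : ∀ p ∈ s, partialSnd T p ≠ 0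

variable {T : ℝ × ℝ → ℝ} {n : WithTop ℕ∞} {s : Set (ℝ × ℝ)}

lemma hasDerivAt_of_differentiableAt_prodMk {x y : ℝ} (hT : DifferentiableAt ℝ T (x, y)) :
    HasDerivAt (fun y ↦ T (x, y)) (partialSnd T (x, y)) y :=
  hT.hasFDerivAt.comp_hasDerivAt y ((hasDerivAt_const y x).prodMk (hasDerivAt_id y))

lemma isFiberwiseSubmersion_of_hasDerivAt (hn : n ≠ 0) {T' : ℝ × ℝ → ℝ}
    (hT : ∀ p ∈ s, ContDiffAt ℝ n T p)
    (hderiv : ∀ p ∈ s, HasDerivAt (fun y ↦ T (p.1, y)) (T' p) p.2) (hne : ∀ p ∈ s, T' p ≠ 0) :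
    IsFiberwiseSubmersion n T s where
  contDiffAt := hT
  partialSnd_ne_zero p hp :=
    (hasDerivAt_of_differentiableAt_prodMk ((hT p hp).differentiableAt hn)).unique
      (hderiv p hp) ▸ hne p hp

lemma contDiffAt_partialSnd {p : ℝ × ℝ} (hT : ContDiffAt ℝ (n + 1) T p) :
    ContDiffAt ℝ n (partialSnd T) p :=
  (hT.fderiv_right le_rfl).clm_apply contDiffAt_const

namespace IsFiberwiseSubmersion

lemma mono {t : Set (ℝ × ℝ)} (hT : IsFiberwiseSubmersion n T s) (hts : t ⊆ s) :
    IsFiberwiseSubmersion n T t :=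
  ⟨fun p hp ↦ hT.contDiffAt p (hts hp), fun p hp ↦ hT.partialSnd_ne_zero p (hts hp)⟩

lemma of_le {m : WithTop ℕ∞} (hT : IsFiberwiseSubmersion n T s) (hmn : m ≤ n) :
    IsFiberwiseSubmersion m T s :=
  ⟨fun p hp ↦ (hT.contDiffAt p hp).of_le hmn, hT.partialSnd_ne_zero⟩

lemma continuousOn (hT : IsFiberwiseSubmersion n T s) : ContinuousOn T s :=
  fun p hp ↦ (hT.contDiffAt p hp).continuousAt.continuousWithinAt

lemma contDiffAt_fiberMap (hT : IsFiberwiseSubmersion n T s) {p : ℝ × ℝ} (hp : p ∈ s) :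
    ContDiffAt ℝ n (fiberMap T) p :=
  contDiffAt_fst.prodMk (hT.contDiffAt p hp)

lemma isInvertible_fderiv_fiberMap (hT : IsFiberwiseSubmersion n T s) (hn : n ≠ 0) {p : ℝ × ℝ}
    (hp : p ∈ s) : (fderiv ℝ (fiberMap T) p).IsInvertible := by
  let e : (ℝ × ℝ) ≃L[ℝ] ℝ × ℝ := (ContinuousLinearEquiv.refl ℝ ℝ).skewProd
    (ContinuousLinearEquiv.unitsEquivAut ℝ (Units.mk0 _ (hT.partialSnd_ne_zero p hp)))
    (fderiv ℝ T p ∘L .inl ℝ ℝ ℝ)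
  have hderiv : HasFDerivAt (fiberMap T) ((ContinuousLinearMap.fst ℝ ℝ ℝ).prod (fderiv ℝ T p)) p :=
    hasFDerivAt_fst.prodMk ((hT.contDiffAt p hp).differentiableAt hn).hasFDerivAt
  refine ⟨e, ?_⟩
  rw [hderiv.fderiv]
  ext <;> simp [e, partialSnd, ← Prod.zero_eq_mk]

lemma exists_sub_eq_mul_partialSnd (hT : IsFiberwiseSubmersion n T s) (hn : n ≠ 0)
    (hs : Convex ℝ s) {x y z : ℝ} (hy : (x, y) ∈ s) (hz : (x, z) ∈ s) :
    ∃ q ∈ s, T (x, z) - T (x, y) = (z - y) * partialSnd T q := by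
  obtain ⟨q, hq, heq⟩ := domain_mvt
    (fun p hp ↦ ((hT.contDiffAt p hp).differentiableAt hn).hasFDerivAt.hasFDerivWithinAt) hs hy hz
  refine ⟨q, hs.segment_subset hy hz hq, ?_⟩
  have hsub : (x, z) - (x, y) = (z - y) • ((0, 1) : ℝ × ℝ) := by simp
  rw [heq, hsub, map_smul, smul_eq_mul, partialSnd]

lemma injOn_fiberMap (hT : IsFiberwiseSubmersion n T s) (hn : n ≠ 0) (hs : Convex ℝ s) :
    InjOn (fiberMap T) s := by
  rintro ⟨x, y⟩ hy ⟨x', z⟩ hz heq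
  obtain ⟨rfl, hTeq⟩ : x = x' ∧ T (x, y) = T (x', z) := Prod.mk_inj.1 heq
  obtain ⟨q, hq, hdiff⟩ := hT.exists_sub_eq_mul_partialSnd hn hs hy hz
  rw [← hTeq, sub_self, eq_comm, mul_eq_zero] at hdiff
  rw [sub_eq_zero.1 (hdiff.resolve_right (hT.partialSnd_ne_zero q hq))]

lemma ae_comp (hT : IsFiberwiseSubmersion 1 T s) (hs : MeasurableSet s) {I : Set ℝ}
    (hI : MeasurableSet I) (hmaps : MapsTo T s I) {P : ℝ → Prop}
    (hP : ∀ᵐ u ∂volume.restrict I, P u) : ∀ᵐ p ∂volume.restrict s, P (T p) := by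
  rw [ae_restrict_iff' hI] at hP
  rw [ae_restrict_iff' hs]
  have hnull : volume ((univ : Set ℝ) ×ˢ {u | ¬(u ∈ I → P u)}) = 0 := by
    rw [Measure.volume_eq_prod, Measure.prod_prod, ae_iff.1 hP, mul_zero]
  refine measure_mono_null ?_ (measure_inter_preimage_eq_zero_of_isInvertible_fderiv
    (Φ := fiberMap T) (fun p ↦ hT.contDiffAt_fiberMap)
    (fun p ↦ hT.isInvertible_fderiv_fiberMap one_ne_zero) hnull)
  intro p hp
  obtain ⟨hps, hPp⟩ := Classical.not_imp.1 hp
  exact ⟨hps, mem_univ _, fun himp ↦ hPp (himp (hmaps hps))⟩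

lemma exists_volume_fiber_preimage_le (hT : IsFiberwiseSubmersion 1 T s) (hs : IsCompact s)
    (hconv : Convex ℝ s) :
    ∃ K : ℝ≥0, ∀ (x : ℝ) (B : Set ℝ),
      volume {y | (x, y) ∈ s ∧ T (x, y) ∈ B} ≤ K * volume B := by
  have hcont : ContinuousOn (fun p ↦ (partialSnd T p)⁻¹) s := fun p hp ↦
    ((contDiffAt_partialSnd (n := 0) (hT.contDiffAt p hp)).continuousAt.inv₀
      (hT.partialSnd_ne_zero p hp)).continuousWithinAt
  obtain ⟨K, hK⟩ := hs.exists_bound_of_continuousOn hcont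
  refine ⟨K.toNNReal, fun x B ↦ ?_⟩
  have hanti : AntilipschitzWith K.toNNReal fun y : {y | (x, y) ∈ s} ↦ T (x, y) := by
    refine .of_le_mul_dist fun ⟨y, hy⟩ ⟨z, hz⟩ ↦ ?_
    obtain ⟨q, hq, hdiff⟩ := hT.exists_sub_eq_mul_partialSnd one_ne_zero hconv hz hy
    have hyz : y - z = (partialSnd T q)⁻¹ * (T (x, y) - T (x, z)) := by
      rw [hdiff, mul_comm (y - z), inv_mul_cancel_left₀ (hT.partialSnd_ne_zero q hq)]
    rw [Subtype.dist_eq, Real.dist_eq, Real.dist_eq, hyz, abs_mul]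
    gcongr
    exact (hK q hq).trans (Real.le_coe_toNNReal K)
  have hpre := hanti.hausdorffMeasure_preimage_le zero_le_one B
  rw [← isometry_subtype_coe.hausdorffMeasure_image (Or.inl zero_le_one),
    hausdorffMeasure_real, ENNReal.rpow_one] at hpre
  refine (measure_mono ?_).trans hpre
  exact fun y hy ↦ ⟨⟨y, hy.1⟩, hy.2, rfl⟩

end IsFiberwiseSubmersion

end FiberMap

section ParametricIntegral

variable {P E F : Type*} [NormedAddCommGroup P] [NormedAddCommGroup E] [MeasurableSpace E]
  [BorelSpace E] [NormedAddCommGroup F] [NormedSpace ℝ F] {μ : Measure E} {G : P × E → ℝ}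
  {f : E → F}

lemma integrable_smul_prodMk_of_hasCompactSupport (hG : Continuous G) (hGc : HasCompactSupport G)
    (hf : LocallyIntegrable f μ) (x : P) : Integrable (fun u ↦ G (x, u) • f u) μ :=
  hf.integrable_smul_left_of_hasCompactSupport (hG.comp (Continuous.prodMk_right x))
    (.intro (hGc.image continuous_snd) fun u hu ↦
      image_eq_zero_of_notMem_tsupport fun hmem ↦ hu ⟨(x, u), hmem, rfl⟩)

variable [NormedSpace ℝ P] [NormedSpace ℝ E]

lemma contDiff_integral_smul_of_hasCompactSupport {n : ℕ∞} (hG : ContDiff ℝ n G)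
    (hGc : HasCompactSupport G) (hf : LocallyIntegrable f μ) :
    ContDiff ℝ n fun x ↦ ∫ u, G (x, u) • f u ∂μ := by
  have hzero : ∀ x, ∀ u ∉ -(Prod.snd '' tsupport G), G (x, -u) = 0 := fun x u hu ↦
    image_eq_zero_of_notMem_tsupport fun hmem ↦ hu ⟨_, hmem, rfl⟩
  have hreflect : ContDiff ℝ n fun q : P × E ↦ G (q.1, -q.2) := hG.comp (by fun_prop)
  rw [← contDiffOn_univ]
  convert contDiffOn_convolution_right_with_param_comp (μ := μ)
    (ContinuousLinearMap.lsmul ℝ ℝ).flip (v := fun _ : P ↦ (0 : E)) contDiffOn_const isOpen_univ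
    (hGc.image continuous_snd).neg (fun x u _ hu ↦ hzero x u hu) hf hreflect.contDiffOn using 2
  simp [convolution]

end ParametricIntegral

namespace IsFiberwiseSubmersion

variable {T : ℝ × ℝ → ℝ} {Q : Set (ℝ × ℝ)}

lemma integrable_integral_eq_of_abs_partialSnd_mul_eq (hT : IsFiberwiseSubmersion 1 T Q)
    (hQ : IsOpen Q) (hconv : Convex ℝ Q) {ψ G : ℝ × ℝ → ℝ} (hψ : support ψ ⊆ Q)
    (hG : support G ⊆ fiberMap T '' Q)
    (hψG : ∀ p ∈ Q, ψ p = |partialSnd T p| * G (fiberMap T p)) {f : ℝ → ℝ} {x : ℝ}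
    (hint : Integrable fun u ↦ G (x, u) * f u) :
    Integrable (fun y ↦ ψ (x, y) * f (T (x, y))) ∧
      ∫ y, ψ (x, y) * f (T (x, y)) = ∫ u, G (x, u) * f u := by
  set Qx : Set ℝ := {y | (x, y) ∈ Q}
  have hQx : MeasurableSet Qx := (hQ.preimage (Continuous.prodMk_right x)).measurableSet
  have hderiv : ∀ y ∈ Qx, HasDerivWithinAt (fun y ↦ T (x, y)) (partialSnd T (x, y)) Qx y :=
    fun y hy ↦ (hasDerivAt_of_differentiableAt_prodMk
      ((hT.contDiffAt _ hy).differentiableAt one_ne_zero)).hasDerivWithinAt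
  have hinj : InjOn (fun y ↦ T (x, y)) Qx := fun y hy z hz heq ↦
    (Prod.mk_inj.1 (hT.injOn_fiberMap one_ne_zero hconv hy hz (Prod.ext rfl heq))).2
  have hzero_left : ∀ y ∉ Qx, ψ (x, y) * f (T (x, y)) = 0 := fun y hy ↦ by
    rw [notMem_support.1 fun hmem ↦ hy (hψ hmem), zero_mul]
  have hzero_right : ∀ u ∉ (fun y ↦ T (x, y)) '' Qx, G (x, u) * f u = 0 := by
    intro u hu
    refine mul_eq_zero_of_left (notMem_support.1 fun hmem ↦ ?_) _
    obtain ⟨⟨x', y⟩, hy, heq⟩ := hG hmem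
    obtain ⟨rfl, hTu⟩ : x' = x ∧ T (x', y) = u := Prod.mk_inj.1 heq
    exact hu ⟨y, hy, hTu⟩
  have hcongr : ∀ y ∈ Qx,
      ψ (x, y) * f (T (x, y)) = |partialSnd T (x, y)| • (G (x, T (x, y)) * f (T (x, y))) :=
    fun y hy ↦ by rw [hψG _ hy, smul_eq_mul, mul_assoc]; rfl
  constructor
  · rw [← integrableOn_iff_integrable_of_support_subset (s := Qx)
      fun y hy ↦ by_contra fun hyQ ↦ hy (hzero_left y hyQ), integrableOn_congr_fun hcongr hQx,
      ← integrableOn_image_iff_integrableOn_abs_deriv_smul hQx hderiv hinj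
        fun u ↦ G (x, u) * f u]
    exact hint.integrableOn
  · rw [← setIntegral_eq_integral_of_forall_compl_eq_zero hzero_left,
      ← setIntegral_eq_integral_of_forall_compl_eq_zero hzero_right,
      integral_image_eq_integral_abs_deriv_smul hQx hderiv hinj,
      setIntegral_congr_fun hQx hcongr]

lemma exists_contDiff_abs_partialSnd_mul_eq {n : ℕ∞} (hT : IsFiberwiseSubmersion (n + 1) T Q)
    (hQ : IsOpen Q) (hconv : Convex ℝ Q) {ψ : ℝ × ℝ → ℝ} (hψ : ContDiff ℝ n ψ)
    (hψc : HasCompactSupport ψ) (hψQ : tsupport ψ ⊆ Q) :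
    ∃ G : ℝ × ℝ → ℝ, ContDiff ℝ n G ∧ HasCompactSupport G ∧
      support G ⊆ fiberMap T '' tsupport ψ ∧
      ∀ p ∈ Q, ψ p = |partialSnd T p| * G (fiberMap T p) := by
  set w : ℝ × ℝ → ℝ := fun p ↦ ψ p * |partialSnd T p|⁻¹
  have hsupp : tsupport w ⊆ tsupport ψ := tsupport_mul_subset_left
  have hw : ContDiff ℝ n w := contDiff_of_forall_mem_tsupport fun p hp ↦ by
    have hpQ : p ∈ Q := hψQ (hsupp hp)
    have hne := hT.partialSnd_ne_zero p hpQ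
    exact hψ.contDiffAt.mul
      (((contDiffAt_partialSnd (hT.contDiffAt p hpQ)).abs hne).inv (abs_ne_zero.2 hne))
  obtain ⟨G, hG, hGc, hGsupp, hGw⟩ := exists_contDiff_comp_eq_of_injOn hQ
    (hT.injOn_fiberMap (by simp) hconv) (by simp) (fun p ↦ hT.contDiffAt_fiberMap)
    (fun p ↦ hT.isInvertible_fderiv_fiberMap (by simp)) le_self_add hw hψc.mul_right
    (hsupp.trans hψQ)
  refine ⟨G, hG, hGc, hGsupp.trans (image_mono hsupp), fun p hp ↦ ?_⟩
  rw [hGw p hp, mul_comm, inv_mul_cancel_right₀ (abs_ne_zero.2 (hT.partialSnd_ne_zero p hp))]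

lemma contDiff_integral_mul_comp {n : ℕ∞} (hT : IsFiberwiseSubmersion (n + 1) T Q)
    (hQ : IsOpen Q) (hconv : Convex ℝ Q) {ψ : ℝ × ℝ → ℝ} (hψ : ContDiff ℝ n ψ)
    (hψc : HasCompactSupport ψ) (hψQ : tsupport ψ ⊆ Q) {f : ℝ → ℝ} {I : Set ℝ}
    (hf : LocallyIntegrableOn f I) (hmaps : MapsTo T Q I) :
    (∀ x, Integrable fun y ↦ ψ (x, y) * f (T (x, y))) ∧
      ContDiff ℝ n fun x ↦ ∫ y, ψ (x, y) * f (T (x, y)) := by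
  obtain ⟨G, hG, hGc, hGsupp, hψG⟩ :=
    hT.exists_contDiff_abs_partialSnd_mul_eq hQ hconv hψ hψc hψQ
  set K := T '' tsupport ψ
  have hK : IsCompact K := hψc.isCompact.image_of_continuousOn (hT.continuousOn.mono hψQ)
  have hKI : K ⊆ I := (hmaps.mono_left hψQ).image_subset
  have hfK : LocallyIntegrable (K.indicator f) :=
    ((hf.integrableOn_compact_subset hKI hK).integrable_indicator
      hK.measurableSet).locallyIntegrable
  have hGf : ∀ x u, G (x, u) • K.indicator f u = G (x, u) * f u := fun x u ↦ by
    by_cases hu : u ∈ K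
    · rw [indicator_of_mem hu, smul_eq_mul]
    · have hGxu : G (x, u) = 0 := by
        by_contra hne
        obtain ⟨p, hp, heq⟩ := hGsupp hne
        exact hu ⟨p, hp, congrArg Prod.snd heq⟩
      rw [hGxu, zero_smul, zero_mul]
  have hfiber := fun x ↦
    (hT.of_le le_add_self).integrable_integral_eq_of_abs_partialSnd_mul_eq hQ hconv
      ((subset_tsupport ψ).trans hψQ) (hGsupp.trans (image_mono hψQ)) hψG (f := f) (x := x)
      (by simpa only [hGf] using
        integrable_smul_prodMk_of_hasCompactSupport hG.continuous hGc hfK x)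
  refine ⟨fun x ↦ (hfiber x).1, ?_⟩
  simpa only [hGf, ← (hfiber _).2] using contDiff_integral_smul_of_hasCompactSupport hG hGc hfK

end IsFiberwiseSubmersion

section FunctionalEquation

lemma tendsto_measure_setOf_natCast_lt_abs {α : Type*} [MeasurableSpace α] {μ : Measure α}
    [IsFiniteMeasure μ] {f : α → ℝ} (hf : AEMeasurable f μ) :
    Tendsto (fun m : ℕ ↦ μ {u | (m : ℝ) < |f u|}) atTop (𝓝 0) := by
  have hempty : ⋂ m : ℕ, {u | (m : ℝ) < |f u|} = ∅ := eq_empty_of_forall_notMem fun u hu ↦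
    (exists_nat_ge |f u|).elim fun m hm ↦ hm.not_gt (mem_iInter.1 hu m)
  rw [← measure_empty (μ := μ), ← hempty]
  exact tendsto_measure_iInter_atTop
    (fun m ↦ nullMeasurableSet_lt aemeasurable_const hf.abs)
    (fun a b hab u (hu : (b : ℝ) < |f u|) ↦ (Nat.cast_le (α := ℝ).2 hab).trans_lt hu)
    ⟨0, measure_ne_top _ _⟩

lemma ae_ae_of_ae_restrict_prod {s : Set (ℝ × ℝ)} (hs : MeasurableSet s) {p : ℝ × ℝ → Prop}
    (hp : ∀ᵐ q ∂volume.restrict s, p q) : ∀ᵐ x : ℝ, ∀ᵐ y : ℝ, (x, y) ∈ s → p (x, y) :=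
  Measure.ae_ae_of_ae_prod ((ae_restrict_iff' hs).1 hp)

lemma exists_nat_frequently_abs_comp_le {ι : Type*} [Finite ι] {T : ι → ℝ × ℝ → ℝ} {f : ℝ → ℝ}
    {I A B : Set ℝ} (hA : IsCompact A) (hB : IsCompact B)
    (hAconv : Convex ℝ A) (hBconv : Convex ℝ B) (hBpos : volume B ≠ 0)
    (hT : ∀ i, IsFiberwiseSubmersion 1 (T i) (A ×ˢ B)) (hmaps : ∀ i, MapsTo (T i) (A ×ˢ B) I)
    (hf : AEMeasurable f (volume.restrict I)) :
    ∃ m : ℕ, ∀ x ∈ A, ∃ᶠ y in ae (volume.restrict B), ∀ i, |f (T i (x, y))| ≤ m := by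
  have := Fintype.ofFinite ι
  have hAB : IsCompact (A ×ˢ B) := hA.prod hB
  choose K hK using fun i ↦ (hT i).exists_volume_fiber_preimage_le hAB (hAconv.prod hBconv)
  let bad (i : ι) (m : ℕ) : Set ℝ := {u | (m : ℝ) < |f u|} ∩ T i '' A ×ˢ B
  have himage : ∀ i, IsCompact (T i '' A ×ˢ B) := fun i ↦
    hAB.image_of_continuousOn (hT i).continuousOn
  have hbad : ∀ i, Tendsto (fun m ↦ volume (bad i m)) atTop (𝓝 0) := fun i ↦ by
    have := (isFiniteMeasure_restrict (μ := volume)).2 (himage i).measure_ne_top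
    simpa only [Measure.restrict_apply' (himage i).measurableSet] using
      tendsto_measure_setOf_natCast_lt_abs (hf.mono_set (hmaps i).image_subset)
  have hsum : Tendsto (fun m ↦ ∑ i, K i * volume (bad i m)) atTop (𝓝 0) := by
    simpa using tendsto_finsetSum Finset.univ fun i _ ↦
      ENNReal.Tendsto.const_mul (hbad i) (.inr (ENNReal.coe_ne_top (r := K i)))
  obtain ⟨m, hm⟩ := (hsum.eventually_lt_const (pos_iff_ne_zero.2 hBpos)).exists
  refine ⟨m, fun x hx hnot ↦ hm.not_ge ?_⟩
  rw [ae_restrict_iff' hB.measurableSet] at hnot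
  calc volume B
      ≤ volume (⋃ i, {y | (x, y) ∈ A ×ˢ B ∧ T i (x, y) ∈ bad i m}) := by
        refine measure_mono_ae ?_
        filter_upwards [hnot] with y hy hyB
        obtain ⟨i, hi⟩ := not_forall.1 (hy hyB)
        exact mem_iUnion.2 ⟨i, ⟨hx, hyB⟩, not_le.1 hi, (x, y), ⟨hx, hyB⟩, rfl⟩
    _ ≤ ∑ i, volume {y | (x, y) ∈ A ×ˢ B ∧ T i (x, y) ∈ bad i m} :=
        measure_iUnion_fintype_le _ _
    _ ≤ ∑ i, K i * volume (bad i m) := Finset.sum_le_sum fun i _ ↦ hK i x _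

/-- The left-hand side `f x + ∑ i, c i * f (T i (x, y))` of a linear functional equation in two
variables whose first term depends on `x` alone. -/
def termSum {ι : Type*} [Fintype ι] (c : ι → ℝ) (T : ι → ℝ × ℝ → ℝ) (f : ℝ → ℝ) (p : ℝ × ℝ) : ℝ :=
  f p.1 + ∑ i, c i * f (T i p)

variable {ι : Type*} [Fintype ι] {c : ι → ℝ} {T : ι → ℝ × ℝ → ℝ} {f g : ℝ → ℝ} {I : Set ℝ}
  {P : Set (ℝ × ℝ)} {n : ℕ∞}

lemma termSum_ae_congr (hP : MeasurableSet P) (hI : MeasurableSet I) (hfst : MapsTo Prod.fst P I)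
    (hmaps : ∀ i, MapsTo (T i) P I) (hT : ∀ i, IsFiberwiseSubmersion 1 (T i) P)
    (hfg : ∀ᵐ u ∂volume.restrict I, f u = g u) :
    ∀ᵐ p ∂volume.restrict P, termSum c T f p = termSum c T g p := by
  have hfst_eq : ∀ᵐ p ∂volume.restrict P, f p.1 = g p.1 := by
    filter_upwards [ae_restrict_of_ae (Measure.quasiMeasurePreserving_fst.ae
      ((ae_restrict_iff' hI).1 hfg)), ae_restrict_mem hP] with p hp hpP using hp (hfst hpP)
  filter_upwards [hfst_eq, ae_all_iff.2 fun i ↦ (hT i).ae_comp hP hI (hmaps i) hfg]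
    with p hp hTp
  simp only [termSum, hp, hTp]

lemma contDiffOn_termSum {m : WithTop ℕ∞} (hfst : MapsTo Prod.fst P I)
    (hmaps : ∀ i, MapsTo (T i) P I) (hT : ∀ i, ContDiffOn ℝ m (T i) P)
    (hf : ContDiffOn ℝ m f I) : ContDiffOn ℝ m (termSum c T f) P :=
  (hf.comp contDiffOn_fst hfst).add
    (.sum fun i _ ↦ contDiffOn_const.mul (hf.comp (hT i) (hmaps i)))

lemma exists_ae_abs_le_of_ae_abs_termSum_le {A B : Set ℝ} (hA : IsCompact A) (hB : IsCompact B)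
    (hAconv : Convex ℝ A) (hBconv : Convex ℝ B) (hBpos : volume B ≠ 0)
    (hT : ∀ i, IsFiberwiseSubmersion 1 (T i) (A ×ˢ B)) (hmaps : ∀ i, MapsTo (T i) (A ×ˢ B) I)
    (hf : AEMeasurable f (volume.restrict I)) {M : ℝ}
    (hM : ∀ᵐ p ∂volume.restrict (A ×ˢ B), |termSum c T f p| ≤ M) :
    ∃ M' : ℝ, ∀ᵐ x ∂volume.restrict A, |f x| ≤ M' := by
  obtain ⟨m, hm⟩ := exists_nat_frequently_abs_comp_le hA hB hAconv hBconv hBpos hT hmaps hf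
  refine ⟨M + ∑ i, |c i| * m, (ae_restrict_iff' hA.measurableSet).2 ?_⟩
  filter_upwards [ae_ae_of_ae_restrict_prod (hA.measurableSet.prod hB.measurableSet) hM]
    with x hx hxA
  obtain ⟨y, hTy, hy, hyB⟩ := ((hm x hxA).and_eventually
    ((ae_restrict_of_ae hx).and (ae_restrict_mem hB.measurableSet))).exists
  calc |f x| = |termSum c T f (x, y) - ∑ i, c i * f (T i (x, y))| := by
        rw [termSum, add_sub_cancel_right]
    _ ≤ |termSum c T f (x, y)| + |∑ i, c i * f (T i (x, y))| := abs_sub _ _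
    _ ≤ M + ∑ i, |c i| * m := by
        gcongr
        · exact hy ⟨hxA, hyB⟩
        · refine (Finset.abs_sum_le_sum_abs _ _).trans (Finset.sum_le_sum fun i _ ↦ ?_)
          rw [abs_mul]
          gcongr
          exact hTy i

variable {R : ℝ × ℝ → ℝ}

lemma locallyIntegrableOn_of_termSum_ae_eq (hP : IsOpen P) (hfst : Prod.fst '' P = I)
    (hT : ∀ i, IsFiberwiseSubmersion 1 (T i) P) (hmaps : ∀ i, MapsTo (T i) P I)
    (hf : AEMeasurable f (volume.restrict I)) (hR : ContinuousOn R P)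
    (heq : ∀ᵐ p ∂volume.restrict P, termSum c T f p = R p) : LocallyIntegrableOn f I := by
  intro x hx
  obtain ⟨⟨x₀, y₀⟩, hp₀, rfl⟩ := hfst.symm ▸ hx
  obtain ⟨ε, hε, hball⟩ := nhds_basis_closedBall.mem_iff.1 (hP.mem_nhds hp₀)
  rw [← closedBall_prod_same] at hball
  set A := closedBall x₀ ε
  set B := closedBall y₀ ε
  have hA : IsCompact A := isCompact_closedBall x₀ ε
  have hB : IsCompact B := isCompact_closedBall y₀ ε
  have hAI : A ⊆ I := fun x hx ↦
    hfst ▸ ⟨(x, y₀), hball ⟨hx, mem_closedBall_self hε.le⟩, rfl⟩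
  obtain ⟨M, hM⟩ := (hA.prod hB).exists_bound_of_continuousOn (hR.mono hball)
  have hbound : ∀ᵐ p ∂volume.restrict (A ×ˢ B), |termSum c T f p| ≤ M := by
    filter_upwards [ae_restrict_of_ae_restrict_of_subset hball heq,
      ae_restrict_mem (hA.prod hB).measurableSet] with p hp hpAB
    exact hp ▸ hM p hpAB
  obtain ⟨M', hM'⟩ := exists_ae_abs_le_of_ae_abs_termSum_le hA hB (convex_closedBall x₀ ε)
    (convex_closedBall y₀ ε) (measure_closedBall_pos volume y₀ hε).ne'
    (fun i ↦ (hT i).mono hball) (fun i ↦ (hmaps i).mono_left hball) hf hbound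
  exact ⟨A, mem_nhdsWithin_of_mem_nhds (closedBall_mem_nhds x₀ hε),
    .of_bound hA.measure_lt_top (hf.mono_set hAI).aestronglyMeasurable M' hM'⟩

lemma ae_mul_integral_eq_of_termSum_ae_eq {Q : Set (ℝ × ℝ)} (hQ : MeasurableSet Q)
    {χ : ℝ × ℝ → ℝ} (hχQ : support χ ⊆ Q) (hχ : ∀ x, Integrable fun y ↦ χ (x, y))
    (hχf : ∀ i x, Integrable fun y ↦ χ (x, y) * f (T i (x, y)))
    (heq : ∀ᵐ p ∂volume.restrict Q, termSum c T f p = R p) :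
    ∀ᵐ x : ℝ, f x * ∫ y, χ (x, y) =
      (∫ y, χ (x, y) * R (x, y)) - ∑ i, c i * ∫ y, χ (x, y) * f (T i (x, y)) := by
  filter_upwards [ae_ae_of_ae_restrict_prod hQ heq] with x hx
  have hpoint : ∀ᵐ y : ℝ, χ (x, y) * R (x, y) =
      f x * χ (x, y) + ∑ i, c i * (χ (x, y) * f (T i (x, y))) := by
    filter_upwards [hx] with y hy
    by_cases hmem : (x, y) ∈ Q
    · rw [← hy hmem, termSum, mul_add, Finset.mul_sum, mul_comm (f x)]
      simp only [mul_left_comm]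
    · simp [notMem_support.1 fun hs ↦ hmem (hχQ hs)]
  rw [integral_congr_ae hpoint, integral_add ((hχ x).const_mul _)
    (integrable_finsetSum _ fun i _ ↦ (hχf i x).const_mul _),
    integral_finsetSum _ fun i _ ↦ (hχf i x).const_mul _]
  simp only [integral_const_mul, add_sub_cancel_right]

lemma exists_hasContDiffRep_nhds_of_termSum_ae_eq {Q : Set (ℝ × ℝ)} (hQ : IsOpen Q)
    (hconv : Convex ℝ Q) (hT : ∀ i, IsFiberwiseSubmersion (n + 1) (T i) Q)
    (hmaps : ∀ i, MapsTo (T i) Q I) (hf : LocallyIntegrableOn f I) (hR : ContDiffOn ℝ n R Q)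
    (heq : ∀ᵐ p ∂volume.restrict Q, termSum c T f p = R p) {p : ℝ × ℝ} (hp : p ∈ Q) :
    ∃ U, IsOpen U ∧ p.1 ∈ U ∧ HasContDiffRep n f U := by
  obtain ⟨χ, hχQ, hχc, hχ, hχrange, hχp⟩ := exists_contDiff_tsupport_subset (n := n)
    (hQ.mem_nhds hp)
  have hone : LocallyIntegrable (fun _ : ℝ ↦ (1 : ℝ)) := locallyIntegrable_const 1
  have hχint : ∀ x, Integrable fun y ↦ χ (x, y) := fun x ↦ by
    simpa using integrable_smul_prodMk_of_hasCompactSupport hχ.continuous hχc hone x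
  have hmass : ContDiff ℝ n fun x ↦ ∫ y, χ (x, y) := by
    simpa using contDiff_integral_smul_of_hasCompactSupport hχ hχc hone
  have hχR : ContDiff ℝ n fun x ↦ ∫ y, χ (x, y) * R (x, y) := by
    have hsmooth : ContDiff ℝ n fun q ↦ χ q * R q :=
      contDiff_of_forall_mem_tsupport fun q hq ↦ hχ.contDiffAt.mul
        (hR.contDiffAt (hQ.mem_nhds (hχQ (tsupport_mul_subset_left hq))))
    simpa using contDiff_integral_smul_of_hasCompactSupport hsmooth hχc.mul_right hone
  have hχT := fun i ↦ (hT i).contDiff_integral_mul_comp hQ hconv hχ hχc hχQ hf (hmaps i)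
  have hne : ∫ y, χ (p.1, y) ≠ 0 :=
    (integral_pos_of_integrable_nonneg_nonzero (x := p.2)
      (hχ.continuous.comp (Continuous.prodMk_right p.1)) (hχint p.1)
      (fun y ↦ (hχrange ⟨(p.1, y), rfl⟩).1) (hχp.trans_ne one_ne_zero)).ne'
  refine ⟨{x | ∫ y, χ (x, y) ≠ 0}, isOpen_ne_fun hmass.continuous continuous_const, hne,
    fun x ↦ ((∫ y, χ (x, y) * R (x, y)) - ∑ i, c i * ∫ y, χ (x, y) * f (T i (x, y))) /
      ∫ y, χ (x, y), ?_, ?_⟩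
  · exact (hχR.sub (.sum fun i _ ↦ contDiff_const.mul (hχT i).2)).contDiffOn.div
      hmass.contDiffOn fun x hx ↦ hx
  · rw [ae_restrict_iff' (isOpen_ne_fun hmass.continuous continuous_const).measurableSet]
    filter_upwards [ae_mul_integral_eq_of_termSum_ae_eq hQ.measurableSet
      ((subset_tsupport χ).trans hχQ) hχint (fun i ↦ (hχT i).1) heq] with x hx hxU
    rw [← hx, mul_div_cancel_right₀ _ hxU]

theorem hasContDiffRep_iff_of_termSum_ae_eq (hP : IsOpen P) (hfst : Prod.fst '' P = I)
    (hT : ∀ i, IsFiberwiseSubmersion (n + 1) (T i) P) (hmaps : ∀ i, MapsTo (T i) P I)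
    (hf : AEMeasurable f (volume.restrict I))
    (hR : ∀ᵐ p ∂volume.restrict P, termSum c T f p = R p) :
    HasContDiffRep n f I ↔ HasContDiffRep n R P := by
  have hI : IsOpen I := hfst ▸ isOpenMap_fst P hP
  have hfstI : MapsTo Prod.fst P I := mapsTo_iff_image_subset.2 hfst.subset
  have hT₁ : ∀ i, IsFiberwiseSubmersion 1 (T i) P := fun i ↦ (hT i).of_le le_add_self
  constructor
  · rintro ⟨g, hg, hfg⟩
    refine ⟨termSum c T g, contDiffOn_termSum hfstI hmaps (fun i q hq ↦
      (((hT i).contDiffAt q hq).of_le le_self_add).contDiffWithinAt) hg, ?_⟩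
    filter_upwards [hR, termSum_ae_congr hP.measurableSet hI.measurableSet hfstI hmaps hT₁ hfg]
      with p hp hpg
    rw [← hp, hpg]
  · rintro ⟨R₀, hR₀, hRR₀⟩
    have heq : ∀ᵐ p ∂volume.restrict P, termSum c T f p = R₀ p := by
      filter_upwards [hR, hRR₀] with p hp hp₀ using hp.trans hp₀
    have hfint : LocallyIntegrableOn f I :=
      locallyIntegrableOn_of_termSum_ae_eq hP hfst hT₁ hmaps hf hR₀.continuousOn heq
    refine hasContDiffRep_of_locally hI fun x hx ↦ ?_
    obtain ⟨p, hp, rfl⟩ := hfst.symm ▸ hx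
    obtain ⟨ε, hε, hball⟩ := Metric.isOpen_iff.1 hP p hp
    exact exists_hasContDiffRep_nhds_of_termSum_ae_eq isOpen_ball (convex_ball p ε)
      (fun i ↦ (hT i).mono hball) (fun i ↦ (hmaps i).mono_left hball) hfint (hR₀.mono hball)
      (ae_restrict_of_ae_restrict_of_subset hball heq) (mem_ball_self hε)

end FunctionalEquation

section SpenceAbel

lemma isOpen_P2 : IsOpen P2 :=
  (isOpen_lt continuous_const continuous_fst).inter
    ((isOpen_lt continuous_fst continuous_snd).inter (isOpen_lt continuous_snd continuous_const))

lemma image_fst_P2 : Prod.fst '' P2 = Ioo (0 : ℝ) 1 := by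
  ext x
  constructor
  · rintro ⟨p, ⟨hx, hxy, hy⟩, rfl⟩
    exact ⟨hx, hxy.trans hy⟩
  · rintro ⟨hx, hx'⟩
    obtain ⟨y, hxy, hy⟩ := exists_between hx'
    exact ⟨(x, y), ⟨hx, hxy, hy⟩, rfl⟩

/-- The coefficients of the last four terms of the five-term equation. -/
def spenceAbelCoeff : Fin 4 → ℝ := ![-1, -1, -1, 1]

/-- The arguments of the last four terms of the five-term equation. -/
noncomputable def spenceAbelMap : Fin 4 → ℝ × ℝ → ℝ :=
  ![Prod.snd, fun p ↦ p.1 / p.2, fun p ↦ (p.2 - 1) / (p.1 - 1),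
    fun p ↦ p.1 * (p.2 - 1) / (p.2 * (p.1 - 1))]

lemma termSum_spenceAbel (L : ℝ → ℝ) (p : ℝ × ℝ) :
    termSum spenceAbelCoeff spenceAbelMap L p =
      L p.1 - L p.2 - L (p.1 / p.2) - L ((p.2 - 1) / (p.1 - 1))
        + L (p.1 * (p.2 - 1) / (p.2 * (p.1 - 1))) := by
  simp only [termSum, Fin.sum_univ_four, spenceAbelCoeff, spenceAbelMap, Matrix.cons_val]
  ring

lemma mapsTo_spenceAbelMap (i : Fin 4) : MapsTo (spenceAbelMap i) P2 (Ioo 0 1) := by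
  rintro ⟨x, y⟩ ⟨hx, hxy, hy⟩
  have hy₀ : 0 < y := hx.trans hxy
  have hx₁ : x - 1 < 0 := sub_neg.2 (hxy.trans hy)
  fin_cases i
  · exact ⟨hy₀, hy⟩
  · exact ⟨div_pos hx hy₀, (div_lt_one hy₀).2 hxy⟩
  · exact ⟨div_pos_of_neg_of_neg (sub_neg.2 hy) hx₁,
      (div_lt_one_of_neg hx₁).2 (sub_lt_sub_right hxy 1)⟩
  · exact ⟨div_pos_of_neg_of_neg (mul_neg_of_pos_of_neg hx (sub_neg.2 hy))
      (mul_neg_of_pos_of_neg hy₀ hx₁),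
      (div_lt_one_of_neg (mul_neg_of_pos_of_neg hy₀ hx₁)).2 (by linarith)⟩

lemma isFiberwiseSubmersion_spenceAbelMap {n : WithTop ℕ∞} (hn : n ≠ 0) (i : Fin 4) :
    IsFiberwiseSubmersion n (spenceAbelMap i) P2 := by
  have hx : ∀ p ∈ P2, p.1 ≠ 0 := fun p hp ↦ hp.1.ne'
  have hy : ∀ p ∈ P2, p.2 ≠ 0 := fun p hp ↦ (hp.1.trans hp.2.1).ne'
  have hx₁ : ∀ p ∈ P2, p.1 - 1 ≠ 0 := fun p hp ↦ (sub_neg.2 (hp.2.1.trans hp.2.2)).ne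
  fin_cases i
  · exact isFiberwiseSubmersion_of_hasDerivAt hn (fun p _ ↦ contDiffAt_snd)
      (fun p _ ↦ hasDerivAt_id p.2) fun p _ ↦ one_ne_zero
  · exact isFiberwiseSubmersion_of_hasDerivAt hn (T' := fun p ↦ p.1 * -(p.2 ^ 2)⁻¹)
      (fun p hp ↦ contDiffAt_fst.div contDiffAt_snd (hy p hp))
      (fun p hp ↦ (hasDerivAt_inv (hy p hp)).const_mul p.1)
      fun p hp ↦ mul_ne_zero (hx p hp) (neg_ne_zero.2 (inv_ne_zero (pow_ne_zero 2 (hy p hp))))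
  · exact isFiberwiseSubmersion_of_hasDerivAt hn (T' := fun p ↦ 1 / (p.1 - 1))
      (fun p hp ↦ (contDiffAt_snd.sub contDiffAt_const).div (contDiffAt_fst.sub contDiffAt_const)
        (hx₁ p hp)) (fun p _ ↦ ((hasDerivAt_id p.2).sub_const 1).div_const (p.1 - 1))
      fun p hp ↦ one_div_ne_zero (hx₁ p hp)
  · refine isFiberwiseSubmersion_of_hasDerivAt hn (T' := fun p ↦ p.1 / ((p.1 - 1) * p.2 ^ 2))
      (fun p hp ↦ (contDiffAt_fst.mul (contDiffAt_snd.sub contDiffAt_const)).div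
        (contDiffAt_snd.mul (contDiffAt_fst.sub contDiffAt_const))
        (mul_ne_zero (hy p hp) (hx₁ p hp))) (fun p hp ↦ ?_)
      fun p hp ↦ div_ne_zero (hx p hp) (mul_ne_zero (hx₁ p hp) (pow_ne_zero 2 (hy p hp)))
    have hy₀ := hy p hp
    have hx₀ := hx₁ p hp
    refine ((((hasDerivAt_id' p.2).sub_const 1).const_mul p.1).div
      ((hasDerivAt_id' p.2).mul_const (p.1 - 1)) (mul_ne_zero hy₀ hx₀)).congr_deriv ?_
    field_simp
    ring

theorem perturbed_spence_abel_regularity_general (R : ℝ × ℝ → ℝ) (L : ℝ → ℝ)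
    (hL : AEMeasurable L (volume.restrict (Ioo (0 : ℝ) 1)))
    (hsol : ∀ᵐ p ∂volume.restrict P2,
      L p.1 - L p.2 - L (p.1 / p.2) - L ((p.2 - 1) / (p.1 - 1))
        + L (p.1 * (p.2 - 1) / (p.2 * (p.1 - 1))) = R p) (k : ℕ∞) :
    HasContDiffRep k L (Ioo (0 : ℝ) 1) ↔ HasContDiffRep k R P2 :=
  hasContDiffRep_iff_of_termSum_ae_eq (c := spenceAbelCoeff) isOpen_P2 image_fst_P2
    (isFiberwiseSubmersion_spenceAbelMap (by simp)) mapsTo_spenceAbelMap hL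
    (by simpa only [termSum_spenceAbel] using hsol)

end SpenceAbel

/-- **Regularity** for the perturbed Spence–Abel system: for `k ∈ ℕ ∪ {∞}`, the solution `L`
agrees almost everywhere with a `C^k` function on `(0,1)` if and only if `R` agrees almost
everywhere with a `C^k` function on the open set `P₂`. -/
theorem perturbed_spence_abel_regularity (R : ℝ × ℝ → ℝ)
    (hR : AEMeasurable R (volume.restrict P2))
    (hRbdd : ∃ M : ℝ, ∀ᵐ p ∂(volume.restrict P2), |R p| ≤ M)
    (h6 : SixTermAE R) (hsym : SymmAE R) (C : ℝ) (L : ℝ → ℝ)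
    (hL : AEMeasurable L (volume.restrict (Set.Ioo (0:ℝ) 1)))
    (hsol : SolvesAE R C L) (k : ℕ∞) :
    (∃ g : ℝ → ℝ, ContDiffOn ℝ k g (Set.Ioo (0:ℝ) 1) ∧
        ∀ᵐ x ∂(volume.restrict (Set.Ioo (0:ℝ) 1)), L x = g x) ↔
      (∃ g : ℝ × ℝ → ℝ, ContDiffOn ℝ k g P2 ∧
        ∀ᵐ p ∂(volume.restrict P2), R p = g p) :=
  perturbed_spence_abel_regularity_general R L hL hsol.1 k
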